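/- Let 0 < θ < 1, let p₀, p₁, q₀, q₁ be globally log-Hölder continuous exponents with 1 ≤ p₀⁻ ≤ p₀⁺ < ∞, 1 ≤ p₁⁻ ≤ p₁⁺ < ∞, 1 ≤ q₀⁻ ≤ q₀⁺ < ∞, 1 ≤ q₁⁻ ≤ q₁⁺ < ∞, and let α₀, α₁ : ℝ^n → ℝ be locally log-Hölder continuous. Define 1/p(·) := (1−θ)/p₀(·) + θ/p₁(·), 1/q(·) := (1−θ)/q₀(·) + θ/q₁(·), and α(·) := (1−θ)α₀(·) + θα₁(·). Assume that p(x)/p₀(x) = q(x)/q₀(x) for all x ∈ ℝ^n. Then the Calderón product (f^{α₀(·)}_{p₀(·),q₀(·)})^{1−θ} · (f^{α₁(·)}_{p₁(·),q₁(·)})^{θ} equals f^{α(·)}_{p(·),q(·)} with equivalent norms. -/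

import Mathlib

open MeasureTheory ENNReal Real Set

noncomputable section

/-- Euclidean space ℝ^n. -/
abbrev En (n : ℕ) := EuclideanSpace ℝ (Fin n)

/-- `g` is locally log-Hölder continuous with constant `c`. -/
def LocLogHolder {n : ℕ} (c : ℝ) (g : En n → ℝ) : Prop :=
  0 < c ∧ ∀ x y : En n, |g x - g y| ≤ c / Real.log (Real.exp 1 + 1 / ‖x - y‖)

/-- `g` is globally log-Hölder continuous with local constant `c`. -/
def GlobLogHolder {n : ℕ} (c : ℝ) (g : En n → ℝ) : Prop :=
  LocLogHolder c g ∧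
    ∃ (gi cd : ℝ), 0 < cd ∧ ∀ x : En n, |g x - gi| ≤ cd / Real.log (Real.exp 1 + ‖x‖)

/-- The kernel η_{v,h}(x) = 2^{nv} (1 + 2^v |x|)^{-h}. -/
def eta (n : ℕ) (v : ℕ) (h : ℝ) (x : En n) : ℝ :=
  (2 : ℝ) ^ (n * v) * (1 + (2 : ℝ) ^ v * ‖x‖) ^ (-h)

/-- The dyadic cube Q_{v,m}. -/
def dyadicCube (n : ℕ) (v : ℤ) (m : Fin n → ℤ) : Set (En n) :=
  {x | ∀ i, (m i : ℝ) ≤ (2 : ℝ) ^ v * x i ∧ (2 : ℝ) ^ v * x i < m i + 1}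

/-- Luxemburg (quasi-)norm of an ℝ≥0∞-valued function with variable exponent `p`. -/
def luxNorm {n : ℕ} (p : En n → ℝ) (F : En n → ℝ≥0∞) : ℝ≥0∞ :=
  sInf {c : ℝ≥0∞ | 0 < c ∧ ∫⁻ x, (F x / c) ^ p x ≤ 1}

/-- The mixed Lebesgue-sequence space norm ‖(F_v)_v‖_{L^{p(·)}(ℓ_{q(·)})}. -/
def mixedNorm {n : ℕ} (p q : En n → ℝ) (F : ℕ → En n → ℝ≥0∞) : ℝ≥0∞ :=
  luxNorm p fun x => (∑' v : ℕ, F v x ^ q x) ^ (1 / q x)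

/-- The sequence space norm ‖λ‖_{f^{α(·)}_{p(·),q(·)}}. -/
def seqNorm {n : ℕ} (α p q : En n → ℝ) (lam : ℕ → (Fin n → ℤ) → ℂ) : ℝ≥0∞ :=
  mixedNorm p q fun v x =>
    ∑' m : Fin n → ℤ,
      ENNReal.ofReal ((2 : ℝ) ^ ((v : ℝ) * (α x + n / 2)) * ‖lam v m‖) *
        (dyadicCube n (v : ℤ) m).indicator (fun _ => (1 : ℝ≥0∞)) x

/-- The sequence space norm ‖λ‖_{f^{α(·)}_{∞,q}}. -/
def seqNormInf {n : ℕ} (α : En n → ℝ) (q : ℝ) (lam : ℕ → (Fin n → ℤ) → ℂ) : ℝ≥0∞ :=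
  ⨆ (vQ : ℤ) (mQ : Fin n → ℤ),
    volume (dyadicCube n vQ mQ) ^ (-(1 / q)) *
      (∑' v : ℕ, if vQ ≤ (v : ℤ) then
          ∫⁻ x in dyadicCube n vQ mQ,
            ∑' m : Fin n → ℤ,
              ENNReal.ofReal ((2 : ℝ) ^ ((v : ℝ) * (α x + n / 2) * q) * ‖lam v m‖ ^ q) *
                (dyadicCube n (v : ℤ) m).indicator (fun _ => (1 : ℝ≥0∞)) x
        else 0) ^ (1 / q)

/-- The Calderón product (quasi-)norm associated to two sequence space norms. -/
def calderonNorm {n : ℕ} (N0 N1 : (ℕ → (Fin n → ℤ) → ℂ) → ℝ≥0∞) (θ : ℝ)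
    (lam : ℕ → (Fin n → ℤ) → ℂ) : ℝ≥0∞ :=
  sInf {M : ℝ≥0∞ | ∃ μ ν : ℕ → (Fin n → ℤ) → ℂ, N0 μ ≤ 1 ∧ N1 ν ≤ 1 ∧
    ∀ v m, ENNReal.ofReal ‖lam v m‖ ≤
      M * ENNReal.ofReal ‖μ v m‖ ^ (1 - θ) * ENNReal.ofReal ‖ν v m‖ ^ θ}

/-!
Each space of the family measures the function `x ↦ (∑_v level(v, x)^q(x))^(1/q(x))` in `L^{p(·)}`,
where `level(v, x)` is the weighted coefficient of the cube of side `2^{-v}` containing `x`. If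
`|λ| ≤ M |μ|^(1-θ) |ν|^θ`, then Hölder's inequality in `ℓ_q` bounds this function for `λ` by `M`
times the geometric mean of those for `μ` and `ν`, and the modular of a geometric mean is at most
the sum of the modulars.

Conversely, put `γ = p/p₀ = q/q₀` and `δ = p/p₁ = q/q₁`, so that `(1-θ)γ + θδ = 1`. With constant
exponents one would let the levels of `μ` and `ν` be the `γ`-th and the `δ`-th power of the level of
`λ`. With variable exponents these powers are taken at the lower left corner of each cube, where
still `|λ| = |μ|^(1-θ) |ν|^θ`. If `λ` has modular at most `1`, its levels at scale `2^{-v}` are at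
most `e^(K(v + log(e + |x|)))`. Log-Hölder continuity then permits replacing the exponent at the
corner by `γ(x)`, up to a constant factor, except where the level is below
`e^(-K(v + log(e + |x|)))`. The error from such small levels is summable in `v` and integrable
in `x`, and Minkowski's inequality in `ℓ_{q₀}` separates it from the main term `level^γ(x)`.
-/

section InterpolatedExponent

variable {θ r r₀ r₁ : ℝ}

lemma interp_weights_eq_one (hr : r ≠ 0) (h : 1 / r = (1 - θ) / r₀ + θ / r₁) :
    (1 - θ) * (r / r₀) + θ * (r / r₁) = 1 := by
  calc (1 - θ) * (r / r₀) + θ * (r / r₁) = r * ((1 - θ) / r₀ + θ / r₁) := by ring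
    _ = 1 := by rw [← h, mul_one_div_cancel hr]

lemma one_le_of_interp (hθ : θ ∈ Icc 0 1) (h₀ : 1 ≤ r₀) (h₁ : 1 ≤ r₁)
    (h : 1 / r = (1 - θ) / r₀ + θ / r₁) : 1 ≤ r := by
  have h_le : 1 / r ≤ 1 := by
    have h_left : (1 - θ) / r₀ ≤ 1 - θ := div_le_self (sub_nonneg.2 hθ.2) h₀
    have h_right : θ / r₁ ≤ θ := div_le_self hθ.1 h₁
    linarith
  have h_pos : 0 < 1 / r := by
    rw [h, div_add_div _ _ (by positivity) (by positivity)]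
    have : 0 < (1 - θ) * r₁ + r₀ * θ := by nlinarith [hθ.1, hθ.2]
    positivity
  rwa [div_le_one (one_div_pos.1 h_pos)] at h_le

lemma rpow_mul_rpow_rpow_interp (a b : ℝ≥0∞) (hr : 0 ≤ r) (h₀ : r₀ ≠ 0) (h₁ : r₁ ≠ 0) :
    (a ^ (1 - θ) * b ^ θ) ^ r = (a ^ r₀) ^ ((1 - θ) * (r / r₀)) * (b ^ r₁) ^ (θ * (r / r₁)) := by
  simp only [ENNReal.mul_rpow_of_nonneg _ _ hr, ← ENNReal.rpow_mul]
  congr 2 <;> field_simp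

lemma interp_denom_ge_one (hθ : θ ∈ Icc 0 1) (h₀ : 1 ≤ r₀) (h₁ : 1 ≤ r₁) :
    1 ≤ (1 - θ) * r₁ + θ * r₀ := by
  nlinarith [hθ.1, hθ.2]

lemma interp_div_eq (hθ : θ ∈ Icc 0 1) (h₀ : 1 ≤ r₀) (h₁ : 1 ≤ r₁)
    (h : 1 / r = (1 - θ) / r₀ + θ / r₁) : r / r₀ = r₁ / ((1 - θ) * r₁ + θ * r₀) := by
  have hr : r ≠ 0 := (one_pos.trans_le (one_le_of_interp hθ h₀ h₁ h)).ne'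
  have h_denom : (1 - θ) * r₁ + θ * r₀ ≠ 0 := (one_pos.trans_le (interp_denom_ge_one hθ h₀ h₁)).ne'
  have h₀' : r₀ ≠ 0 := by positivity
  have h₁' : r₁ ≠ 0 := by positivity
  field_simp at h ⊢
  linarith

lemma abs_interp_div_sub_le {s₀ s₁ b₀ b₁ : ℝ} (hθ : θ ∈ Icc 0 1) (hr₀ : 1 ≤ r₀) (hr₁ : 1 ≤ r₁)
    (hs₀ : 1 ≤ s₀) (hs₁ : 1 ≤ s₁) (hb₀ : s₀ ≤ b₀) (hb₁ : s₁ ≤ b₁) :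
    |r₁ / ((1 - θ) * r₁ + θ * r₀) - s₁ / ((1 - θ) * s₁ + θ * s₀)| ≤
      b₀ * |r₁ - s₁| + b₁ * |r₀ - s₀| := by
  have hθ₀ : 0 ≤ θ := hθ.1
  have h_r := interp_denom_ge_one hθ hr₀ hr₁
  have h_s := interp_denom_ge_one hθ hs₀ hs₁
  have h_num : r₁ * ((1 - θ) * s₁ + θ * s₀) - ((1 - θ) * r₁ + θ * r₀) * s₁ =
      θ * (s₀ * (r₁ - s₁) + s₁ * (s₀ - r₀)) := by ring
  rw [div_sub_div _ _ (by positivity) (by positivity), h_num, abs_div,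
    abs_of_pos (mul_pos (one_pos.trans_le h_r) (one_pos.trans_le h_s))]
  calc |θ * (s₀ * (r₁ - s₁) + s₁ * (s₀ - r₀))| /
        (((1 - θ) * r₁ + θ * r₀) * ((1 - θ) * s₁ + θ * s₀))
      ≤ |θ * (s₀ * (r₁ - s₁) + s₁ * (s₀ - r₀))| :=
        div_le_self (abs_nonneg _) (one_le_mul_of_one_le_of_one_le h_r h_s)
    _ = θ * |s₀ * (r₁ - s₁) + s₁ * (s₀ - r₀)| := by rw [abs_mul, abs_of_nonneg hθ₀]
    _ ≤ |s₀ * (r₁ - s₁) + s₁ * (s₀ - r₀)| := mul_le_of_le_one_left (abs_nonneg _) hθ.2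
    _ ≤ |s₀ * (r₁ - s₁)| + |s₁ * (s₀ - r₀)| := abs_add_le _ _
    _ = s₀ * |r₁ - s₁| + s₁ * |r₀ - s₀| := by
        rw [abs_mul, abs_mul, abs_of_nonneg (zero_le_one.trans hs₀),
          abs_of_nonneg (zero_le_one.trans hs₁), abs_sub_comm s₀]
    _ ≤ b₀ * |r₁ - s₁| + b₁ * |r₀ - s₀| := by gcongr

end InterpolatedExponent

section EllNorm

variable {ι : Type*} {q : ℝ}

/-- The `ℓ_q` (quasi-)norm of a family in `ℝ≥0∞`, written with the same formula as in `mixedNorm`;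
it is meant for `0 < q`. -/
def ellNorm (q : ℝ) (a : ι → ℝ≥0∞) : ℝ≥0∞ := (∑' i, a i ^ q) ^ (1 / q)

lemma ellNorm_rpow_self (hq : q ≠ 0) (a : ι → ℝ≥0∞) : ellNorm q a ^ q = ∑' i, a i ^ q := by
  rw [ellNorm, ← ENNReal.rpow_mul, one_div_mul_cancel hq, ENNReal.rpow_one]

lemma ellNorm_le_iff (hq : 0 < q) {a : ι → ℝ≥0∞} {b : ℝ≥0∞} :
    ellNorm q a ≤ b ↔ ∑' i, a i ^ q ≤ b ^ q := by
  rw [← ellNorm_rpow_self hq.ne', ENNReal.rpow_le_rpow_iff hq]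

lemma ellNorm_mono (hq : 0 ≤ q) {a b : ι → ℝ≥0∞} (h : ∀ i, a i ≤ b i) :
    ellNorm q a ≤ ellNorm q b := by
  unfold ellNorm
  gcongr
  exact h _

lemma le_ellNorm (hq : 0 < q) (a : ι → ℝ≥0∞) (i : ι) : a i ≤ ellNorm q a := by
  rw [← ENNReal.rpow_le_rpow_iff hq, ellNorm_rpow_self hq.ne']
  exact ENNReal.le_tsum i

lemma ellNorm_const_mul (hq : 0 < q) (c : ℝ≥0∞) (a : ι → ℝ≥0∞) :
    ellNorm q (fun i => c * a i) = c * ellNorm q a := by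
  simp only [ellNorm, ENNReal.mul_rpow_of_nonneg _ _ hq.le, ENNReal.tsum_mul_left]
  rw [ENNReal.mul_rpow_of_nonneg _ _ (by positivity), ← ENNReal.rpow_mul,
    mul_one_div_cancel hq.ne', ENNReal.rpow_one]

lemma ellNorm_rpow {g : ℝ} (hg : g ≠ 0) (a : ι → ℝ≥0∞) :
    ellNorm q (fun i => a i ^ g) = ellNorm (g * q) a ^ g := by
  simp only [ellNorm, ← ENNReal.rpow_mul]
  congr 1
  field_simp

lemma ellNorm_add_le (hq : 1 ≤ q) (a b : ι → ℝ≥0∞) :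
    ellNorm q (fun i => a i + b i) ≤ ellNorm q a + ellNorm q b := by
  let _ : MeasurableSpace ι := ⊤
  have h := ENNReal.lintegral_Lp_add_le (μ := Measure.count) (f := a) (g := b)
    measurable_from_top.aemeasurable measurable_from_top.aemeasurable hq
  simpa only [ellNorm, lintegral_count, Pi.add_apply] using h

lemma ellNorm_le_tsum (hq : 1 ≤ q) (a : ι → ℝ≥0∞) : ellNorm q a ≤ ∑' i, a i := by
  have rpow_eq_mul (t : ℝ≥0∞) : t ^ q = t * t ^ (q - 1) := by
    conv_rhs => rw [← ENNReal.rpow_one t, ← ENNReal.rpow_mul, one_mul,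
      ← ENNReal.rpow_add_of_nonneg _ _ zero_le_one (sub_nonneg.2 hq), add_sub_cancel]
  rw [ellNorm_le_iff (one_pos.trans_le hq), rpow_eq_mul, ← ENNReal.tsum_mul_right]
  refine ENNReal.tsum_le_tsum fun i => ?_
  rw [rpow_eq_mul]
  gcongr
  exact ENNReal.le_tsum i

lemma tsum_rpow_mul_rpow_le (a b : ι → ℝ≥0∞) {s t : ℝ} (hs : 0 ≤ s) (ht : 0 ≤ t)
    (hst : s + t = 1) : ∑' i, a i ^ s * b i ^ t ≤ (∑' i, a i) ^ s * (∑' i, b i) ^ t := by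
  let _ : MeasurableSpace ι := ⊤
  have h := ENNReal.lintegral_mul_norm_pow_le (μ := Measure.count) (f := a) (g := b)
    measurable_from_top.aemeasurable measurable_from_top.aemeasurable hs ht hst
  simpa only [lintegral_count] using h

lemma ellNorm_rpow_mul_rpow_le {θ q₀ q₁ : ℝ} (hθ : θ ∈ Icc 0 1) (hq : 0 < q) (hq₀ : 0 < q₀)
    (hq₁ : 0 < q₁) (h : 1 / q = (1 - θ) / q₀ + θ / q₁) (a b : ι → ℝ≥0∞) :
    ellNorm q (fun i => a i ^ (1 - θ) * b i ^ θ) ≤ ellNorm q₀ a ^ (1 - θ) * ellNorm q₁ b ^ θ := by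
  have hθ' : 0 ≤ 1 - θ := sub_nonneg.2 hθ.2
  have hθ₀ : 0 ≤ θ := hθ.1
  rw [ellNorm_le_iff hq, rpow_mul_rpow_rpow_interp _ _ hq.le hq₀.ne' hq₁.ne',
    ellNorm_rpow_self hq₀.ne', ellNorm_rpow_self hq₁.ne']
  simp only [rpow_mul_rpow_rpow_interp _ _ hq.le hq₀.ne' hq₁.ne']
  exact tsum_rpow_mul_rpow_le _ _ (by positivity) (by positivity)
    (interp_weights_eq_one hq.ne' h)

end EllNorm

section LuxNorm

variable {n : ℕ} {p : En n → ℝ}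

lemma lintegral_div_rpow_le_one_of_luxNorm_lt (hp : ∀ x, 0 ≤ p x) {F : En n → ℝ≥0∞} {c : ℝ≥0∞}
    (h : luxNorm p F < c) : ∫⁻ x, (F x / c) ^ p x ≤ 1 := by
  obtain ⟨d, ⟨-, hd⟩, hdc⟩ := sInf_lt_iff.1 h
  refine (lintegral_mono fun x => ?_).trans hd
  exact ENNReal.rpow_le_rpow (ENNReal.div_le_div_left hdc.le _) (hp x)

lemma luxNorm_le_mul (hp : ∀ x, 1 ≤ p x) {F G : En n → ℝ≥0∞} {D C : ℝ≥0∞} (hC : 1 ≤ C)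
    (hC_top : C ≠ ⊤) (hF : ∀ x, F x ≤ D * G x) (hG : ∫⁻ x, G x ^ p x ≤ C) :
    luxNorm p F ≤ D * C := by
  have hC₀ : C ≠ 0 := (one_pos.trans_le hC).ne'
  refine le_of_forall_gt_imp_ge_of_dense fun c hc => sInf_le ⟨zero_le.trans_lt hc, ?_⟩
  have h_ratio : D / c ≤ C⁻¹ := by
    refine ENNReal.div_le_of_le_mul ?_
    rw [mul_comm, ← div_eq_mul_inv, ENNReal.le_div_iff_mul_le (.inl hC₀) (.inl hC_top)]
    exact hc.le
  have h_point (x : En n) : (F x / c) ^ p x ≤ C⁻¹ * G x ^ p x := by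
    have hp₀ : 0 ≤ p x := zero_le_one.trans (hp x)
    calc (F x / c) ^ p x ≤ (C⁻¹ * G x) ^ p x := by
          gcongr
          calc F x / c ≤ D * G x / c := by gcongr; exact hF x
            _ = D / c * G x := by simp only [div_eq_mul_inv]; ring
            _ ≤ C⁻¹ * G x := by gcongr
      _ = C⁻¹ ^ p x * G x ^ p x := ENNReal.mul_rpow_of_nonneg _ _ hp₀
      _ ≤ C⁻¹ * G x ^ p x := by
          gcongr
          exact ENNReal.rpow_le_self_of_le_one (ENNReal.inv_le_one.2 hC) (hp x)
  calc ∫⁻ x, (F x / c) ^ p x ≤ ∫⁻ x, C⁻¹ * G x ^ p x := lintegral_mono h_point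
    _ = C⁻¹ * ∫⁻ x, G x ^ p x := lintegral_const_mul' _ _ (ENNReal.inv_ne_top.2 hC₀)
    _ ≤ C⁻¹ * C := by gcongr
    _ = 1 := ENNReal.inv_mul_cancel hC₀ hC_top

lemma rpow_mul_rpow_le_add (a b : ℝ≥0∞) {s t : ℝ} (hs : 0 ≤ s) (ht : 0 ≤ t)
    (hst : s + t = 1) : a ^ s * b ^ t ≤ a + b := by
  calc a ^ s * b ^ t ≤ (a + b) ^ s * (a + b) ^ t := by
        gcongr
        · exact le_self_add
        · exact le_add_self
    _ = a + b := by rw [← ENNReal.rpow_add_of_nonneg _ _ hs ht, hst, ENNReal.rpow_one]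

-- The constant is `2` from passing to functions of modular at most `1`, times `2` from bounding the
-- modular of their geometric mean by the sum of their modulars.
lemma luxNorm_le_four_mul {θ : ℝ} (hθ : θ ∈ Icc 0 1) {p₀ p₁ : En n → ℝ}
    (hp₀ : ∀ x, 1 ≤ p₀ x) (hp₁ : ∀ x, 1 ≤ p₁ x)
    (hp : ∀ x, 1 / p x = (1 - θ) / p₀ x + θ / p₁ x) {F G H : En n → ℝ≥0∞} {M : ℝ≥0∞}
    (hp₀_meas : Measurable p₀) (hG_meas : Measurable G)
    (hF : ∀ x, F x ≤ M * (G x ^ (1 - θ) * H x ^ θ)) (hG : luxNorm p₀ G ≤ 1)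
    (hH : luxNorm p₁ H ≤ 1) : luxNorm p F ≤ 4 * M := by
  have hθ' : 0 ≤ 1 - θ := sub_nonneg.2 hθ.2
  have hθ₀ : 0 ≤ θ := hθ.1
  have hp_one (x : En n) : 1 ≤ p x := one_le_of_interp hθ (hp₀ x) (hp₁ x) (hp x)
  have h_scale (x : En n) : F x ≤ 2 * M * ((G x / 2) ^ (1 - θ) * (H x / 2) ^ θ) := by
    have h_two : (2 : ℝ≥0∞) * (2⁻¹ ^ (1 - θ) * 2⁻¹ ^ θ) = 1 := by
      rw [← ENNReal.rpow_add_of_nonneg _ _ hθ' hθ₀, sub_add_cancel, ENNReal.rpow_one,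
        ENNReal.mul_inv_cancel two_ne_zero ofNat_ne_top]
    calc F x ≤ 2 * (2⁻¹ ^ (1 - θ) * 2⁻¹ ^ θ) * (M * (G x ^ (1 - θ) * H x ^ θ)) := by
          rw [h_two, one_mul]; exact hF x
      _ = 2 * M * ((G x / 2) ^ (1 - θ) * (H x / 2) ^ θ) := by
          simp only [div_eq_mul_inv, ENNReal.mul_rpow_of_nonneg _ _ hθ',
            ENNReal.mul_rpow_of_nonneg _ _ hθ₀]
          ring
  have h_modular : ∫⁻ x, ((G x / 2) ^ (1 - θ) * (H x / 2) ^ θ) ^ p x ≤ 2 := by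
    calc _ ≤ ∫⁻ x, ((G x / 2) ^ p₀ x + (H x / 2) ^ p₁ x) := by
          refine lintegral_mono fun x => ?_
          have := hp₀ x
          have := hp₁ x
          have := hp_one x
          dsimp only
          rw [rpow_mul_rpow_rpow_interp (r₀ := p₀ x) (r₁ := p₁ x) _ _ (by positivity)
            (by positivity) (by positivity)]
          exact rpow_mul_rpow_le_add _ _ (by positivity) (by positivity)
            (interp_weights_eq_one (by positivity) (hp x))
      _ = (∫⁻ x, (G x / 2) ^ p₀ x) + ∫⁻ x, (H x / 2) ^ p₁ x :=
          lintegral_add_left ((hG_meas.div_const 2).pow hp₀_meas) _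
      _ ≤ 1 + 1 := by
          gcongr
          · exact lintegral_div_rpow_le_one_of_luxNorm_lt (fun x => zero_le_one.trans (hp₀ x))
              (hG.trans_lt ENNReal.one_lt_two)
          · exact lintegral_div_rpow_le_one_of_luxNorm_lt (fun x => zero_le_one.trans (hp₁ x))
              (hH.trans_lt ENNReal.one_lt_two)
      _ = 2 := one_add_one_eq_two
  calc luxNorm p F ≤ 2 * M * 2 :=
        luxNorm_le_mul hp_one ENNReal.one_lt_two.le ofNat_ne_top h_scale h_modular
    _ = 4 * M := by ring

end LuxNorm

section DyadicCubes

variable {n : ℕ} {v : ℕ} {m : Fin n → ℤ} {x : En n}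

/-- The index `m` of the dyadic cube `Q_{v,m}` that contains `x`. -/
def dyadicIndex (v : ℕ) (x : En n) : Fin n → ℤ := fun i => ⌊(2 : ℝ) ^ v * x i⌋

/-- The lower left corner `2^{-v} m` of the dyadic cube `Q_{v,m}`, used as its reference point. -/
def dyadicCorner (v : ℕ) (m : Fin n → ℤ) : En n := WithLp.toLp 2 fun i => (m i : ℝ) / 2 ^ v

lemma mem_dyadicCube_iff : x ∈ dyadicCube n (v : ℤ) m ↔ m = dyadicIndex v x := by
  simp only [dyadicCube, dyadicIndex, mem_ofPred_eq, zpow_natCast, funext_iff]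
  refine forall_congr' fun i => ?_
  rw [eq_comm, Int.floor_eq_iff]

lemma mem_dyadicCube_dyadicIndex : x ∈ dyadicCube n (v : ℤ) (dyadicIndex v x) :=
  mem_dyadicCube_iff.2 rfl

lemma dyadicCorner_mem_dyadicCube : dyadicCorner v m ∈ dyadicCube n (v : ℤ) m := by
  intro i
  have h : (2 : ℝ) ^ (v : ℤ) * dyadicCorner v m i = m i := by
    rw [zpow_natCast, dyadicCorner]
    exact mul_div_cancel₀ _ (by positivity)
  rw [h]
  exact ⟨le_rfl, lt_add_one _⟩

lemma norm_sub_dyadicCorner_le (hx : x ∈ dyadicCube n (v : ℤ) m) :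
    ‖x - dyadicCorner v m‖ ≤ (n + 1) / 2 ^ v := by
  have h_coord (i : Fin n) : ‖(x - dyadicCorner v m) i‖ ^ 2 ≤ (1 / 2 ^ v) ^ 2 := by
    have h_fract : (x - dyadicCorner v m) i = Int.fract ((2 : ℝ) ^ v * x i) / 2 ^ v := by
      rw [mem_dyadicCube_iff.1 hx]
      simp only [dyadicCorner, dyadicIndex, PiLp.sub_apply, Int.fract]
      field_simp
    rw [h_fract, norm_div, Real.norm_of_nonneg (Int.fract_nonneg _), norm_pow, Real.norm_two]
    gcongr
    exact (Int.fract_lt_one _).le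
  rw [EuclideanSpace.norm_eq, Real.sqrt_le_iff]
  refine ⟨by positivity, (Finset.sum_le_sum fun i _ => h_coord i).trans ?_⟩
  rw [Finset.sum_const, Finset.card_univ, Fintype.card_fin, nsmul_eq_mul, div_pow, div_pow,
    one_pow, mul_one_div]
  gcongr
  nlinarith [(Nat.cast_nonneg n : (0 : ℝ) ≤ n)]

lemma dyadicCube_eq_preimage : dyadicCube n (v : ℤ) m =
    (MeasurableEquiv.toLp 2 (Fin n → ℝ)).symm ⁻¹'
      univ.pi fun i => Ico ((m i : ℝ) / 2 ^ v) (((m i : ℝ) + 1) / 2 ^ v) := by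
  have h_two : (0 : ℝ) < 2 ^ v := by positivity
  ext x
  simp only [dyadicCube, mem_ofPred_eq, zpow_natCast, mem_preimage, mem_pi, mem_univ,
    true_imp_iff, mem_Ico, div_le_iff₀' h_two, lt_div_iff₀' h_two]
  rfl

lemma measurableSet_dyadicCube : MeasurableSet (dyadicCube n (v : ℤ) m) := by
  rw [dyadicCube_eq_preimage]
  exact (MeasurableEquiv.measurable _) (MeasurableSet.univ_pi fun _ => measurableSet_Ico)

lemma volume_dyadicCube :
    volume (dyadicCube n (v : ℤ) m) = ENNReal.ofReal ((1 / 2 ^ v) ^ n) := by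
  have h_side (i : Fin n) : ((m i : ℝ) + 1) / 2 ^ v - (m i : ℝ) / 2 ^ v = 1 / 2 ^ v := by ring
  rw [dyadicCube_eq_preimage,
    (EuclideanSpace.volume_preserving_symm_measurableEquiv_toLp (Fin n)).measure_preimage
      (MeasurableSet.univ_pi fun _ => measurableSet_Ico).nullMeasurableSet, Real.volume_pi_Ico]
  simp only [h_side, Finset.prod_const, Finset.card_univ, Fintype.card_fin]
  rw [ENNReal.ofReal_pow (by positivity)]

lemma measurable_dyadicIndex : Measurable (dyadicIndex v : En n → Fin n → ℤ) := by
  refine measurable_pi_lambda _ fun i => Int.measurable_floor.comp ?_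
  fun_prop

end DyadicCubes

section LogHolder

variable {n : ℕ}

lemma one_le_log_exp_one_add {t : ℝ} (ht : 0 ≤ t) : 1 ≤ Real.log (exp 1 + t) := by
  rw [Real.le_log_iff_exp_le (by positivity)]
  linarith

lemma LocLogHolder.abs_sub_le {c : ℝ} {g : En n → ℝ} (h : LocLogHolder c g) (x y : En n) :
    |g x - g y| ≤ c :=
  (h.2 x y).trans (div_le_self h.1.le (one_le_log_exp_one_add (by positivity)))

lemma LocLogHolder.continuous {c : ℝ} {g : En n → ℝ} (h : LocLogHolder c g) : Continuous g := by
  refine continuous_iff_continuousAt.2 fun x => continuousAt_iff_punctured_nhds.2 ?_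
  have h_log : Filter.Tendsto (fun y => Real.log (exp 1 + 1 / ‖y - x‖)) (nhdsWithin x {x}ᶜ)
      Filter.atTop := by
    refine Real.tendsto_log_atTop.comp (Filter.tendsto_atTop_add_const_left _ _ ?_)
    simp only [one_div]
    exact (tendsto_norm_sub_self_nhdsNE x).inv_tendsto_nhdsGT_zero
  rw [tendsto_iff_dist_tendsto_zero]
  exact squeeze_zero (fun _ => dist_nonneg) (fun y => h.2 y x) (h_log.const_div_atTop c)

lemma LocLogHolder.exists_forall_le {c : ℝ} {g : En n → ℝ} (h : LocLogHolder c g) :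
    ∃ b, ∀ x, g x ≤ b :=
  ⟨g 0 + c, fun x => by linarith [le_abs_self (g x - g 0), h.abs_sub_le x 0]⟩

/-- Weighted oscillation bound on dyadic cubes: `w v x * |g x - g y| ≤ C` whenever `x` lies in a
cube of side `2^{-v}` with lower left corner `y`. -/
def HasDyadicOsc (w : ℕ → En n → ℝ) (C : ℝ) (g : En n → ℝ) : Prop :=
  ∀ (v : ℕ) (m : Fin n → ℤ), ∀ x ∈ dyadicCube n (v : ℤ) m,
    w v x * |g x - g (dyadicCorner v m)| ≤ C

/-- The weight `v + log (e + |x|)`: it bounds `|Real.log A|` for the sizes `A` that occur at scale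
`2^{-v}` near `x`, so that it is the oscillation an exponent may be tested against. -/
def logWeight (v : ℕ) (x : En n) : ℝ := v + Real.log (exp 1 + ‖x‖)

lemma logWeight_nonneg (v : ℕ) (x : En n) : 0 ≤ logWeight v x := by
  have := one_le_log_exp_one_add (norm_nonneg x)
  unfold logWeight
  positivity

lemma HasDyadicOsc.nonneg {w : ℕ → En n → ℝ} {C : ℝ} {g : En n → ℝ} (h : HasDyadicOsc w C g) :
    0 ≤ C := by
  simpa using h 0 0 _ dyadicCorner_mem_dyadicCube

lemma HasDyadicOsc.of_abs_sub_le {w : ℕ → En n → ℝ} {C D a b : ℝ} {f g h : En n → ℝ}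
    (hf : HasDyadicOsc w C f) (hg : HasDyadicOsc w D g) (ha : 0 ≤ a) (hb : 0 ≤ b)
    (hw : ∀ v x, 0 ≤ w v x) (hh : ∀ x y, |h x - h y| ≤ a * |f x - f y| + b * |g x - g y|) :
    HasDyadicOsc w (a * C + b * D) h := by
  intro v m x hx
  set y := dyadicCorner v m
  calc w v x * |h x - h y| ≤ w v x * (a * |f x - f y| + b * |g x - g y|) :=
        mul_le_mul_of_nonneg_left (hh x y) (hw v x)
    _ = a * (w v x * |f x - f y|) + b * (w v x * |g x - g y|) := by ring
    _ ≤ a * C + b * D := by gcongr <;> [exact hf v m x hx; exact hg v m x hx]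

lemma log_exp_one_add_le_mul_log {R s t : ℝ} (hR : 0 ≤ R) (hs : 0 ≤ s) (ht : 0 ≤ t)
    (h : s ≤ t + R) : Real.log (exp 1 + s) ≤ (1 + Real.log (1 + R)) * Real.log (exp 1 + t) := by
  have h_one : 1 ≤ exp 1 := Real.one_le_exp zero_le_one
  have h_log : 0 ≤ Real.log (1 + R) := Real.log_nonneg (by linarith)
  have h_t := one_le_log_exp_one_add ht
  calc Real.log (exp 1 + s) ≤ Real.log ((1 + R) * (exp 1 + t)) :=
        Real.log_le_log (by positivity) (by nlinarith)
    _ = Real.log (1 + R) + Real.log (exp 1 + t) := Real.log_mul (by positivity) (by positivity)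
    _ ≤ (1 + Real.log (1 + R)) * Real.log (exp 1 + t) := by nlinarith

lemma natCast_mul_log_two_le {R r : ℝ} {v : ℕ} (hR : 1 ≤ R) (hr : 0 < r) (h : r ≤ R / 2 ^ v) :
    v * Real.log 2 ≤ (1 + Real.log R) * Real.log (exp 1 + 1 / r) := by
  have h_log : 0 ≤ Real.log R := Real.log_nonneg hR
  have h_r := one_le_log_exp_one_add (one_div_nonneg.2 hr.le)
  have h_two : (2 : ℝ) ^ v ≤ R * (1 / r) := by
    rw [mul_one_div, le_div_iff₀ hr, mul_comm]
    exact (le_div_iff₀ (by positivity)).1 h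
  calc v * Real.log 2 = Real.log (2 ^ v) := (Real.log_pow _ _).symm
    _ ≤ Real.log (R * (exp 1 + 1 / r)) :=
        Real.log_le_log (by positivity) (by nlinarith [Real.exp_pos 1])
    _ = Real.log R + Real.log (exp 1 + 1 / r) := Real.log_mul (by positivity) (by positivity)
    _ ≤ (1 + Real.log R) * Real.log (exp 1 + 1 / r) := by nlinarith

lemma LocLogHolder.exists_hasDyadicOsc {c : ℝ} {g : En n → ℝ} (h : LocLogHolder c g) :
    ∃ C, HasDyadicOsc (fun v _ => v) C g := by
  have h_two : 0 < Real.log 2 := Real.log_pos one_lt_two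
  have h_n : (1 : ℝ) ≤ n + 1 := by linarith [(Nat.cast_nonneg n : (0 : ℝ) ≤ n)]
  have h_nlog : 0 ≤ Real.log ((n : ℝ) + 1) := Real.log_nonneg h_n
  have hc := h.1
  refine ⟨c * (1 + Real.log (n + 1)) / Real.log 2, fun v m x hx => ?_⟩
  set y := dyadicCorner v m
  rcases (norm_nonneg (x - y)).eq_or_lt with h_eq | h_pos
  · rw [sub_eq_zero.1 (norm_eq_zero.1 h_eq.symm), sub_self, abs_zero, mul_zero]
    positivity
  have h_log := one_le_log_exp_one_add (one_div_nonneg.2 h_pos.le)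
  calc (v : ℝ) * |g x - g y| ≤ v * (c / Real.log (exp 1 + 1 / ‖x - y‖)) := by gcongr; exact h.2 x y
    _ ≤ c * (1 + Real.log (n + 1)) / Real.log 2 := by
        rw [← mul_div_assoc, div_le_div_iff₀ (by positivity) h_two]
        nlinarith [natCast_mul_log_two_le h_n h_pos (norm_sub_dyadicCorner_le hx)]

lemma GlobLogHolder.exists_hasDyadicOsc {c : ℝ} {g : En n → ℝ} (h : GlobLogHolder c g) :
    ∃ C, HasDyadicOsc logWeight C g := by
  obtain ⟨h_loc, g_inf, d, hd, hg⟩ := h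
  obtain ⟨C, hC⟩ := h_loc.exists_hasDyadicOsc
  refine ⟨C + (d + d * (1 + Real.log (1 + (n + 1)))), fun v m x hx => ?_⟩
  set y := dyadicCorner v m
  set Lx := Real.log (exp 1 + ‖x‖) with hLx
  set Ly := Real.log (exp 1 + ‖y‖)
  have hLx_pos : 0 < Lx := one_pos.trans_le (one_le_log_exp_one_add (norm_nonneg x))
  have hLy_pos : 0 < Ly := one_pos.trans_le (one_le_log_exp_one_add (norm_nonneg y))
  have h_compare : Lx ≤ (1 + Real.log (1 + (n + 1))) * Ly := by
    refine log_exp_one_add_le_mul_log (by positivity) (norm_nonneg x) (norm_nonneg y) ?_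
    calc ‖x‖ ≤ ‖y‖ + ‖x - y‖ := norm_le_norm_add_norm_sub' x y
      _ ≤ ‖y‖ + (n + 1) := by
        gcongr
        exact (norm_sub_dyadicCorner_le hx).trans
          (div_le_self (by positivity) (one_le_pow₀ one_le_two))
  have h_inf : |g x - g y| ≤ d / Lx + d / Ly := by
    refine (abs_sub_le _ g_inf _).trans (add_le_add (hg x) ?_)
    rw [abs_sub_comm]
    exact hg y
  calc logWeight v x * |g x - g y| = v * |g x - g y| + Lx * |g x - g y| := by
        rw [logWeight, ← hLx]; ring
    _ ≤ C + Lx * (d / Lx + d / Ly) := by gcongr; exact hC v m x hx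
    _ = C + (d + d * (Lx / Ly)) := by field_simp
    _ ≤ C + (d + d * (1 + Real.log (1 + (n + 1)))) := by
        gcongr
        exact (div_le_iff₀ hLy_pos).2 h_compare

end LogHolder

section SeqNorm

variable {n : ℕ} {α α₀ α₁ p q : En n → ℝ} {θ : ℝ}

/-- The weight `2^{v(s + n/2)}` of a coefficient at scale `2^{-v}` and smoothness `s`. -/
def dyadicScale (n v : ℕ) (s : ℝ) : ℝ := 2 ^ ((v : ℝ) * (s + n / 2))

/-- The weighted coefficient at `x`: the value at `x` of the `v`-th function in the definition
of `‖λ‖_{f^{α(·)}_{p(·),q(·)}}`, in which only the cube containing `x` contributes. -/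
def level (α : En n → ℝ) (lam : ℕ → (Fin n → ℤ) → ℂ) (v : ℕ) (x : En n) : ℝ :=
  dyadicScale n v (α x) * ‖lam v (dyadicIndex v x)‖

/-- The function `(∑_v |f_v(x)|^{q(x)})^{1/q(x)}` whose `L^{p(·)}` norm is the norm of `λ` in
`f^{α(·)}_{p(·),q(·)}`. -/
def seqFunction (α q : En n → ℝ) (lam : ℕ → (Fin n → ℤ) → ℂ) (x : En n) : ℝ≥0∞ :=
  ellNorm (q x) fun v => ENNReal.ofReal (level α lam v x)

lemma dyadicScale_pos (v : ℕ) (s : ℝ) : 0 < dyadicScale n v s := by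
  unfold dyadicScale
  positivity

lemma dyadicScale_interp (v : ℕ) (s t : ℝ) : dyadicScale n v ((1 - θ) * s + θ * t) =
    dyadicScale n v s ^ (1 - θ) * dyadicScale n v t ^ θ := by
  simp only [dyadicScale]
  rw [← Real.rpow_mul zero_le_two, ← Real.rpow_mul zero_le_two, ← Real.rpow_add two_pos]
  ring_nf

lemma level_nonneg (α : En n → ℝ) (lam : ℕ → (Fin n → ℤ) → ℂ) (v : ℕ) (x : En n) :
    0 ≤ level α lam v x :=
  mul_nonneg (dyadicScale_pos _ _).le (norm_nonneg _)

lemma seqNorm_eq_luxNorm (α p q : En n → ℝ) (lam : ℕ → (Fin n → ℤ) → ℂ) :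
    seqNorm α p q lam = luxNorm p (seqFunction α q lam) := by
  unfold seqNorm mixedNorm seqFunction ellNorm level dyadicScale
  congr! 5 with x v
  dsimp only
  rw [tsum_eq_single (dyadicIndex v x)]
  · rw [indicator_of_mem mem_dyadicCube_dyadicIndex, mul_one]
  · intro m hm
    rw [indicator_of_notMem (hm <| mem_dyadicCube_iff.1 ·), mul_zero]

lemma measurable_seqFunction (hα : Measurable α) (hq : Measurable q)
    (lam : ℕ → (Fin n → ℤ) → ℂ) : Measurable (seqFunction α q lam) := by
  have h_coeff (v : ℕ) : Measurable fun x : En n => ‖lam v (dyadicIndex v x)‖ :=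
    (measurable_of_countable fun m => ‖lam v m‖).comp measurable_dyadicIndex
  unfold seqFunction ellNorm level dyadicScale
  refine (Measurable.tsum fun v => .pow (.ennreal_ofReal (.mul ?_ (h_coeff v))) hq).pow ?_ <;>
    fun_prop

lemma level_div (α : En n → ℝ) (lam : ℕ → (Fin n → ℤ) → ℂ) {c : ℝ} (hc : 0 < c) (v : ℕ)
    (x : En n) : level α (fun v m => lam v m / c) v x = c⁻¹ * level α lam v x := by
  simp only [level, norm_div, Complex.norm_real, Real.norm_of_nonneg hc.le]
  ring

lemma seqFunction_div (lam : ℕ → (Fin n → ℤ) → ℂ) {c : ℝ} (hc : 0 < c) (x : En n)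
    (hq : 0 < q x) :
    seqFunction α q (fun v m => lam v m / c) x = seqFunction α q lam x / ENNReal.ofReal c := by
  simp only [seqFunction, level_div _ _ hc, ENNReal.ofReal_mul (inv_nonneg.2 hc.le)]
  rw [ellNorm_const_mul hq, ENNReal.ofReal_inv_of_pos hc, mul_comm, div_eq_mul_inv]

lemma ofReal_level_le {lam μ ν : ℕ → (Fin n → ℤ) → ℂ} {M : ℝ≥0∞} (hθ : θ ∈ Icc 0 1)
    (hα : ∀ x, α x = (1 - θ) * α₀ x + θ * α₁ x)
    (h : ∀ v m, ENNReal.ofReal ‖lam v m‖ ≤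
      M * ENNReal.ofReal ‖μ v m‖ ^ (1 - θ) * ENNReal.ofReal ‖ν v m‖ ^ θ) (v : ℕ) (x : En n) :
    ENNReal.ofReal (level α lam v x) ≤ M * (ENNReal.ofReal (level α₀ μ v x) ^ (1 - θ) *
      ENNReal.ofReal (level α₁ ν v x) ^ θ) := by
  have hθ' : 0 ≤ 1 - θ := sub_nonneg.2 hθ.2
  have h_scale := dyadicScale_pos (n := n) v
  calc ENNReal.ofReal (level α lam v x)
      = ENNReal.ofReal (dyadicScale n v (α₀ x)) ^ (1 - θ) *
          ENNReal.ofReal (dyadicScale n v (α₁ x)) ^ θ *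
          ENNReal.ofReal ‖lam v (dyadicIndex v x)‖ := by
        rw [level, hα, dyadicScale_interp, ENNReal.ofReal_rpow_of_pos (h_scale _),
          ENNReal.ofReal_rpow_of_pos (h_scale _),
          ENNReal.ofReal_mul (mul_nonneg (rpow_nonneg (h_scale _).le _)
            (rpow_nonneg (h_scale _).le _)),
          ENNReal.ofReal_mul (rpow_nonneg (h_scale _).le _)]
    _ ≤ ENNReal.ofReal (dyadicScale n v (α₀ x)) ^ (1 - θ) *
          ENNReal.ofReal (dyadicScale n v (α₁ x)) ^ θ *
          (M * ENNReal.ofReal ‖μ v (dyadicIndex v x)‖ ^ (1 - θ) *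
            ENNReal.ofReal ‖ν v (dyadicIndex v x)‖ ^ θ) := by
        gcongr
        exact h v _
    _ = M * (ENNReal.ofReal (level α₀ μ v x) ^ (1 - θ) *
          ENNReal.ofReal (level α₁ ν v x) ^ θ) := by
        simp only [level, ENNReal.ofReal_mul (h_scale _).le, ENNReal.mul_rpow_of_nonneg _ _ hθ',
          ENNReal.mul_rpow_of_nonneg _ _ hθ.1]
        ring

theorem seqNorm_le_four_mul_calderonNorm {p₀ p₁ q₀ q₁ : En n → ℝ} (hθ : θ ∈ Icc 0 1)
    (hp₀_meas : Measurable p₀) (hq₀_meas : Measurable q₀) (hα₀_meas : Measurable α₀)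
    (hp₀ : ∀ x, 1 ≤ p₀ x) (hp₁ : ∀ x, 1 ≤ p₁ x) (hq₀ : ∀ x, 1 ≤ q₀ x) (hq₁ : ∀ x, 1 ≤ q₁ x)
    (hp : ∀ x, 1 / p x = (1 - θ) / p₀ x + θ / p₁ x)
    (hq : ∀ x, 1 / q x = (1 - θ) / q₀ x + θ / q₁ x)
    (hα : ∀ x, α x = (1 - θ) * α₀ x + θ * α₁ x) (lam : ℕ → (Fin n → ℤ) → ℂ) :
    seqNorm α p q lam ≤ 4 * calderonNorm (seqNorm α₀ p₀ q₀) (seqNorm α₁ p₁ q₁) θ lam := by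
  rw [mul_comm, ← ENNReal.div_le_iff four_ne_zero ofNat_ne_top]
  refine le_sInf fun M ⟨μ, ν, hμ, hν, hM⟩ => ENNReal.div_le_of_le_mul' ?_
  rw [seqNorm_eq_luxNorm] at hμ hν ⊢
  refine luxNorm_le_four_mul hθ hp₀ hp₁ hp hp₀_meas
    (measurable_seqFunction hα₀_meas hq₀_meas μ) (fun x => ?_) hμ hν
  have hq_pos := one_pos.trans_le (one_le_of_interp hθ (hq₀ x) (hq₁ x) (hq x))
  have hq₀_pos := one_pos.trans_le (hq₀ x)
  have hq₁_pos := one_pos.trans_le (hq₁ x)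
  calc seqFunction α q lam x
      ≤ ellNorm (q x) fun v => M * (ENNReal.ofReal (level α₀ μ v x) ^ (1 - θ) *
          ENNReal.ofReal (level α₁ ν v x) ^ θ) :=
        ellNorm_mono hq_pos.le fun v => ofReal_level_le hθ hα hM v x
    _ = M * ellNorm (q x) fun v => ENNReal.ofReal (level α₀ μ v x) ^ (1 - θ) *
          ENNReal.ofReal (level α₁ ν v x) ^ θ := ellNorm_const_mul hq_pos _ _
    _ ≤ M * (seqFunction α₀ q₀ μ x ^ (1 - θ) * seqFunction α₁ q₁ ν x ^ θ) := by
        gcongr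
        exact ellNorm_rpow_mul_rpow_le hθ hq_pos hq₀_pos hq₁_pos (hq x) _ _

end SeqNorm

section Factorization

variable {n : ℕ} {α α₀ α₁ γ p q p₀ q₀ : En n → ℝ} {Ca Ca₀ Cγ g₀ g₁ : ℝ}
  {lam : ℕ → (Fin n → ℤ) → ℂ} {v : ℕ} {m : Fin n → ℤ} {x : En n}

lemma dyadicScale_le_of_mul_abs_le {s t C : ℝ} (h : v * |s - t| ≤ C) :
    dyadicScale n v s ≤ 2 ^ C * dyadicScale n v t := by
  rw [dyadicScale, dyadicScale, ← Real.rpow_add two_pos]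
  refine Real.rpow_le_rpow_of_exponent_le one_le_two ?_
  have : (v : ℝ) * (s - t) ≤ v * |s - t| := by gcongr; exact le_abs_self _
  linarith

lemma level_dyadicCorner_le (hα : HasDyadicOsc (fun v _ => v) Ca α)
    (hx : x ∈ dyadicCube n (v : ℤ) m) :
    level α lam v (dyadicCorner v m) ≤ 2 ^ Ca * level α lam v x := by
  have h_scale : dyadicScale n v (α (dyadicCorner v m)) ≤ 2 ^ Ca * dyadicScale n v (α x) := by
    refine dyadicScale_le_of_mul_abs_le ?_
    rw [abs_sub_comm]
    exact hα v m x hx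
  rw [level, level, ← mem_dyadicCube_iff.1 hx, ← mem_dyadicCube_iff.1 dyadicCorner_mem_dyadicCube,
    ← mul_assoc]
  gcongr

lemma mul_volume_le_lintegral_rpow (hp : ∀ x, 1 ≤ p x) {s : Set (En n)} (hs : MeasurableSet s)
    {F : En n → ℝ≥0∞} {c : ℝ≥0∞} (hc : 1 ≤ c) (hF : ∀ x ∈ s, c ≤ F x) :
    c * volume s ≤ ∫⁻ x, F x ^ p x := by
  calc c * volume s = ∫⁻ _ in s, c := (setLIntegral_const s c).symm
    _ ≤ ∫⁻ x in s, F x ^ p x := by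
        refine setLIntegral_mono' hs fun x hx => ?_
        calc c ≤ c ^ p x := ENNReal.le_rpow_self_of_one_le hc (hp x)
          _ ≤ F x ^ p x := ENNReal.rpow_le_rpow (hF x hx) (zero_le_one.trans (hp x))
    _ ≤ ∫⁻ x, F x ^ p x := setLIntegral_le_lintegral _ _

lemma level_dyadicCorner_le_of_modular_le_one (hα : HasDyadicOsc (fun v _ => v) Ca α)
    (hp : ∀ x, 1 ≤ p x) (hq : ∀ x, 0 < q x) (h : ∫⁻ x, seqFunction α q lam x ^ p x ≤ 1) :
    level α lam v (dyadicCorner v m) ≤ 2 ^ (Ca + v * n) := by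
  set t := level α lam v (dyadicCorner v m) / 2 ^ Ca with ht
  have h_pow : (1 : ℝ) ≤ 2 ^ ((v : ℝ) * n) := Real.one_le_rpow one_le_two (by positivity)
  suffices t ≤ 2 ^ ((v : ℝ) * n) by
    rwa [ht, div_le_iff₀' (by positivity), ← Real.rpow_add two_pos] at this
  rcases le_total t 1 with ht_one | ht_one
  · exact ht_one.trans h_pow
  have h_cube (x : En n) (hx : x ∈ dyadicCube n (v : ℤ) m) :
      ENNReal.ofReal t ≤ seqFunction α q lam x := by
    refine le_trans ?_ (le_ellNorm (hq x) _ v)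
    exact ENNReal.ofReal_le_ofReal ((div_le_iff₀' (by positivity)).2 (level_dyadicCorner_le hα hx))
  have h_mul : ENNReal.ofReal (t * (1 / 2 ^ v) ^ n) ≤ 1 := by
    rw [ENNReal.ofReal_mul (zero_le_one.trans ht_one), ← volume_dyadicCube (m := m)]
    exact (mul_volume_le_lintegral_rpow hp measurableSet_dyadicCube
      (ENNReal.one_le_ofReal.2 ht_one) h_cube).trans h
  rw [ENNReal.ofReal_le_one, one_div, inv_pow, ← pow_mul, ← div_eq_mul_inv,
    div_le_one (by positivity)] at h_mul
  exact_mod_cast h_mul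

-- Either `A` is not small, so that `|log A| ≤ K W` and the exponents `g`, `h` are interchangeable,
-- or `A ^ h` is itself negligible.
lemma rpow_le_exp_mul_rpow_add_exp {A g h W K C : ℝ} (hA : 0 ≤ A) (hg₀ : 0 ≤ g₀) (hh : g₀ ≤ h)
    (hW : 0 ≤ W) (hK : 0 ≤ K) (hA_le : A ≤ exp (K * W)) (h_osc : W * |g - h| ≤ C) :
    A ^ h ≤ exp (K * C) * A ^ g + exp (-(K * g₀ * W)) := by
  rcases le_total A (exp (-(K * W))) with h_small | h_large
  · have : A ^ h ≤ exp (-(K * g₀ * W)) := by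
      calc A ^ h ≤ exp (-(K * W)) ^ h := Real.rpow_le_rpow hA h_small (hg₀.trans hh)
        _ = exp (-(K * h * W)) := by rw [← Real.exp_mul]; ring_nf
        _ ≤ exp (-(K * g₀ * W)) := by gcongr
    have : 0 ≤ exp (K * C) * A ^ g := by positivity
    linarith
  · have hA_pos : 0 < A := (Real.exp_pos _).trans_le h_large
    have h_log : |Real.log A| ≤ K * W :=
      abs_le.2 ⟨(Real.le_log_iff_exp_le hA_pos).2 h_large, (Real.log_le_iff_le_exp hA_pos).2 hA_le⟩
    have h_exponent : Real.log A * (h - g) ≤ K * C := by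
      calc Real.log A * (h - g) ≤ |Real.log A| * |g - h| := by
            rw [abs_sub_comm g, ← abs_mul]; exact le_abs_self _
        _ ≤ K * W * |g - h| := by gcongr
        _ = K * (W * |g - h|) := mul_assoc _ _ _
        _ ≤ K * C := by gcongr
    have : A ^ h ≤ exp (K * C) * A ^ g := by
      calc A ^ h = exp (Real.log A * (h - g)) * A ^ g := by
            rw [← Real.rpow_def_of_pos hA_pos, ← Real.rpow_add hA_pos, sub_add_cancel]
        _ ≤ exp (K * C) * A ^ g := by gcongr
    have := Real.exp_pos (-(K * g₀ * W))
    linarith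

/-- An integrable majorant of the error made when the exponent is moved inside a cube. -/
def decay (x : En n) : ℝ := (1 + ‖x‖) ^ (-((n : ℝ) + 1))

lemma decay_nonneg (x : En n) : 0 ≤ decay x := by
  unfold decay
  positivity

lemma decay_le_one (x : En n) : decay x ≤ 1 :=
  Real.rpow_le_one_of_one_le_of_nonpos (by linarith [norm_nonneg x]) (by linarith)

lemma lintegral_decay_ne_top : ∫⁻ x : En n, ENNReal.ofReal (decay x) ≠ ⊤ :=
  (finite_integral_one_add_norm (by simp)).ne

lemma exp_neg_mul_logWeight_le (v : ℕ) (x : En n) :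
    exp (-((n + 1) * logWeight v x)) ≤ 2⁻¹ ^ v * decay x := by
  have h_two : exp (-((n + 1) * v)) ≤ (2⁻¹ : ℝ) ^ v := by
    have h_exp : (2 : ℝ) ≤ exp 1 := by linarith [Real.add_one_le_exp (1 : ℝ)]
    calc exp (-((n + 1) * v)) ≤ exp (-v) := by
          gcongr
          nlinarith [mul_nonneg (Nat.cast_nonneg (α := ℝ) n) (Nat.cast_nonneg (α := ℝ) v)]
      _ = (exp 1)⁻¹ ^ v := by rw [Real.exp_neg, inv_pow, ← Real.exp_nat_mul, mul_one]
      _ ≤ (2⁻¹ : ℝ) ^ v := by gcongr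
  have h_decay : exp (-((n + 1) * Real.log (exp 1 + ‖x‖))) ≤ decay x := by
    rw [decay, Real.rpow_def_of_pos (by positivity)]
    have h_log : Real.log (1 + ‖x‖) ≤ Real.log (exp 1 + ‖x‖) := by
      gcongr
      exact Real.one_le_exp zero_le_one
    gcongr
    nlinarith [(Nat.cast_nonneg n : (0 : ℝ) ≤ n)]
  rw [logWeight, mul_add, neg_add, Real.exp_add]
  gcongr

/-- The Calderón factor of `lam` in the space with exponent `p₀`, for `γ = p / p₀`. On each cube
it is chosen so that, at the lower left corner, its level for the smoothness `α₀` is the `γ`-th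
power of the level of `lam` for the smoothness `α`. -/
def calderonFactor (α α₀ γ : En n → ℝ) (lam : ℕ → (Fin n → ℤ) → ℂ) (v : ℕ) (m : Fin n → ℤ) : ℂ :=
  let y := dyadicCorner v m
  ((level α lam v y ^ γ y / dyadicScale n v (α₀ y) : ℝ) : ℂ)

lemma norm_calderonFactor (α α₀ γ : En n → ℝ) (lam : ℕ → (Fin n → ℤ) → ℂ) (v : ℕ)
    (m : Fin n → ℤ) : ‖calderonFactor α α₀ γ lam v m‖ =
      level α lam v (dyadicCorner v m) ^ γ (dyadicCorner v m) /
        dyadicScale n v (α₀ (dyadicCorner v m)) := by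
  rw [calderonFactor, Complex.norm_real, Real.norm_of_nonneg]
  exact div_nonneg (rpow_nonneg (level_nonneg _ _ _ _) _) (dyadicScale_pos _ _).le

lemma level_calderonFactor_le_corner (hα₀ : HasDyadicOsc (fun v _ => v) Ca₀ α₀)
    (hx : x ∈ dyadicCube n (v : ℤ) m) :
    level α₀ (calderonFactor α α₀ γ lam) v x ≤
      2 ^ Ca₀ * level α lam v (dyadicCorner v m) ^ γ (dyadicCorner v m) := by
  have h_level := rpow_nonneg (level_nonneg α lam v (dyadicCorner v m)) (γ (dyadicCorner v m))
  rw [level, norm_calderonFactor, ← mem_dyadicCube_iff.1 hx, mul_div_left_comm, mul_comm]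
  gcongr
  exact (div_le_iff₀ (dyadicScale_pos _ _)).2 (dyadicScale_le_of_mul_abs_le (hα₀ v m x hx))

lemma level_rpow_le_level_rpow_add_decay (hα : HasDyadicOsc (fun v _ => v) Ca α)
    (hγ : HasDyadicOsc logWeight Cγ γ) (hg₀ : 0 < g₀) (hγ_lower : ∀ x, g₀ ≤ γ x)
    (h_bound : level α lam v (dyadicCorner v m) ≤ 2 ^ (Ca + v * n))
    (hx : x ∈ dyadicCube n (v : ℤ) m) :
    level α lam v (dyadicCorner v m) ^ γ (dyadicCorner v m) ≤
      exp ((Ca + n + (n + 1) / g₀) * Cγ) * level α lam v (dyadicCorner v m) ^ γ x +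
        2⁻¹ ^ v * decay x := by
  have hCa := hα.nonneg
  have h_log := one_le_log_exp_one_add (norm_nonneg x)
  have h_weight := logWeight_nonneg v x
  set K := Ca + n + (n + 1) / g₀ with hK
  have hK_nonneg : 0 ≤ K := by positivity
  have h_exp : (2 : ℝ) ^ (Ca + v * n) ≤ exp (K * logWeight v x) := by
    have h_exponent : Ca + v * n ≤ K * logWeight v x := by
      calc Ca + v * n ≤ (Ca + n) * logWeight v x := by
            unfold logWeight
            nlinarith [mul_nonneg hCa (Nat.cast_nonneg (α := ℝ) v), Nat.cast_nonneg (α := ℝ) n]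
        _ ≤ K * logWeight v x := by
            gcongr
            exact le_add_of_nonneg_right (by positivity)
    calc (2 : ℝ) ^ (Ca + v * n) ≤ exp 1 ^ (Ca + v * n) := by
          gcongr
          linarith [Real.add_one_le_exp (1 : ℝ)]
      _ = exp (Ca + v * n) := Real.exp_one_rpow _
      _ ≤ exp (K * logWeight v x) := Real.exp_le_exp.2 h_exponent
  have h_rate : (n : ℝ) + 1 ≤ K * g₀ := by
    have : K * g₀ = (Ca + n) * g₀ + (n + 1) := by rw [hK]; field_simp
    have : 0 ≤ (Ca + n) * g₀ := by positivity
    linarith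
  refine (rpow_le_exp_mul_rpow_add_exp (level_nonneg _ _ _ _) hg₀.le (hγ_lower _) h_weight
    hK_nonneg (h_bound.trans h_exp) (hγ v m x hx)).trans ?_
  gcongr
  refine le_trans ?_ (exp_neg_mul_logWeight_le v x)
  gcongr

lemma level_calderonFactor_le (hα : HasDyadicOsc (fun v _ => v) Ca α)
    (hα₀ : HasDyadicOsc (fun v _ => v) Ca₀ α₀) (hγ : HasDyadicOsc logWeight Cγ γ) (hg₀ : 0 < g₀)
    (hγ_lower : ∀ x, g₀ ≤ γ x) (hγ_upper : ∀ x, γ x ≤ g₁)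
    (h_bound : ∀ m, level α lam v (dyadicCorner v m) ≤ 2 ^ (Ca + v * n)) (x : En n) :
    level α₀ (calderonFactor α α₀ γ lam) v x ≤
      2 ^ Ca₀ * exp ((Ca + n + (n + 1) / g₀) * Cγ) * 2 ^ (Ca * g₁) *
        (level α lam v x ^ γ x + 2⁻¹ ^ v * decay x) := by
  have hCa := hα.nonneg
  have hCγ := hγ.nonneg
  have hx : x ∈ dyadicCube n (v : ℤ) (dyadicIndex v x) := mem_dyadicCube_dyadicIndex
  set y := dyadicCorner v (dyadicIndex v x)
  set E := exp ((Ca + n + (n + 1) / g₀) * Cγ)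
  have hE : 1 ≤ E := Real.one_le_exp (by positivity)
  have hγx : 0 < γ x := hg₀.trans_le (hγ_lower x)
  have h_two : (1 : ℝ) ≤ 2 ^ (Ca * g₁) :=
    Real.one_le_rpow one_le_two (mul_nonneg hCa (hγx.le.trans (hγ_upper x)))
  have h_decay : 0 ≤ 2⁻¹ ^ v * decay x := mul_nonneg (by positivity) (decay_nonneg x)
  have h_level : level α lam v y ^ γ x ≤ 2 ^ (Ca * g₁) * level α lam v x ^ γ x := by
    have h_nonneg := level_nonneg α lam v
    calc level α lam v y ^ γ x ≤ (2 ^ Ca * level α lam v x) ^ γ x := by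
          gcongr
          · exact h_nonneg y
          · exact level_dyadicCorner_le hα hx
      _ = 2 ^ (Ca * γ x) * level α lam v x ^ γ x := by
          rw [Real.mul_rpow (by positivity) (h_nonneg x), ← Real.rpow_mul zero_le_two]
      _ ≤ 2 ^ (Ca * g₁) * level α lam v x ^ γ x := by
          have := rpow_nonneg (h_nonneg x) (γ x)
          gcongr
          · exact one_le_two
          · exact hγ_upper x
  calc level α₀ (calderonFactor α α₀ γ lam) v x ≤ 2 ^ Ca₀ * level α lam v y ^ γ y :=
        level_calderonFactor_le_corner hα₀ hx
    _ ≤ 2 ^ Ca₀ * (E * level α lam v y ^ γ x + 2⁻¹ ^ v * decay x) := by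
        gcongr
        exact level_rpow_le_level_rpow_add_decay hα hγ hg₀ hγ_lower (h_bound _) hx
    _ ≤ 2 ^ Ca₀ * (E * (2 ^ (Ca * g₁) * level α lam v x ^ γ x) +
          E * 2 ^ (Ca * g₁) * (2⁻¹ ^ v * decay x)) := by
        gcongr 2 ^ Ca₀ * (E * ?_ + ?_)
        exact le_mul_of_one_le_left h_decay (one_le_mul_of_one_le_of_one_le hE h_two)
    _ = _ := by ring

lemma ellNorm_le_of_le_rpow_add_geometric {q₀ g K e : ℝ} (hq₀ : 1 ≤ q₀) (hg : 0 < g) (hK : 0 ≤ K)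
    {a b : ℕ → ℝ} (hb : ∀ v, 0 ≤ b v) (h : ∀ v, a v ≤ K * (b v ^ g + 2⁻¹ ^ v * e)) :
    ellNorm q₀ (fun v => ENNReal.ofReal (a v)) ≤ 3 * ENNReal.ofReal K *
      max (ellNorm (g * q₀) (fun v => ENNReal.ofReal (b v)) ^ g) (ENNReal.ofReal e) := by
  have hq₀_pos : 0 < q₀ := one_pos.trans_le hq₀
  set S := ellNorm (g * q₀) fun v => ENNReal.ofReal (b v)
  have h_point (v : ℕ) : ENNReal.ofReal (a v) ≤
      ENNReal.ofReal K * (ENNReal.ofReal (b v) ^ g + 2⁻¹ ^ v * ENNReal.ofReal e) := by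
    refine (ENNReal.ofReal_le_ofReal (h v)).trans ?_
    rw [ENNReal.ofReal_mul hK, ENNReal.ofReal_rpow_of_nonneg (hb v) hg.le]
    gcongr
    refine ENNReal.ofReal_add_le.trans_eq ?_
    rw [ENNReal.ofReal_mul (by positivity), ENNReal.ofReal_pow (by positivity),
      ENNReal.ofReal_inv_of_pos two_pos, ENNReal.ofReal_ofNat]
  have h_geometric : ellNorm q₀ (fun v : ℕ => 2⁻¹ ^ v * ENNReal.ofReal e) ≤
      2 * ENNReal.ofReal e := by
    refine (ellNorm_le_tsum hq₀ _).trans_eq ?_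
    rw [ENNReal.tsum_mul_right, ENNReal.tsum_geometric, ENNReal.one_sub_inv_two, inv_inv]
  calc ellNorm q₀ (fun v => ENNReal.ofReal (a v))
      ≤ ENNReal.ofReal K *
          ellNorm q₀ fun v => ENNReal.ofReal (b v) ^ g + 2⁻¹ ^ v * ENNReal.ofReal e :=
        (ellNorm_mono hq₀_pos.le h_point).trans_eq (ellNorm_const_mul hq₀_pos _ _)
    _ ≤ ENNReal.ofReal K * (S ^ g + 2 * ENNReal.ofReal e) := by
        gcongr
        refine (ellNorm_add_le hq₀ _ _).trans ?_
        rw [ellNorm_rpow hg.ne']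
        gcongr
    _ ≤ ENNReal.ofReal K * (max (S ^ g) (ENNReal.ofReal e) +
          2 * max (S ^ g) (ENNReal.ofReal e)) := by
        gcongr
        · exact le_max_left _ _
        · exact le_max_right _ _
    _ = 3 * ENNReal.ofReal K * max (S ^ g) (ENNReal.ofReal e) := by ring

lemma lintegral_max_rpow_le {F e : En n → ℝ≥0∞} (hp₀ : ∀ x, 1 ≤ p₀ x)
    (hp : ∀ x, p x = γ x * p₀ x) (he : Measurable e) (he_one : ∀ x, e x ≤ 1) :
    ∫⁻ x, max (F x ^ γ x) (e x) ^ p₀ x ≤ (∫⁻ x, F x ^ p x) + ∫⁻ x, e x := by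
  rw [← lintegral_add_right _ he]
  refine lintegral_mono fun x => ?_
  rcases max_choice (F x ^ γ x) (e x) with h | h
  · rw [h, hp, ENNReal.rpow_mul]
    exact le_self_add
  · rw [h]
    exact (ENNReal.rpow_le_self_of_le_one (he_one x) (hp₀ x)).trans le_add_self

lemma exists_seqNorm_calderonFactor_le_one (hα : ∃ C, HasDyadicOsc (fun v _ => v) C α)
    (hα₀ : ∃ C, HasDyadicOsc (fun v _ => v) C α₀) (hγ : ∃ C, HasDyadicOsc logWeight C γ)
    (hg₀ : 0 < g₀) (hγ_lower : ∀ x, g₀ ≤ γ x) (hγ_upper : ∀ x, γ x ≤ g₁) (hp : ∀ x, 1 ≤ p x)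
    (hp₀ : ∀ x, 1 ≤ p₀ x) (hq₀ : ∀ x, 1 ≤ q₀ x) (hpγ : ∀ x, p x = γ x * p₀ x)
    (hqγ : ∀ x, q x = γ x * q₀ x) :
    ∃ D : ℝ, 0 < D ∧ ∀ lam, ∫⁻ x, seqFunction α q lam x ^ p x ≤ 1 →
      seqNorm α₀ p₀ q₀ (fun v m => calderonFactor α α₀ γ lam v m / D) ≤ 1 := by
  obtain ⟨Ca, hα⟩ := hα
  obtain ⟨Ca₀, hα₀⟩ := hα₀
  obtain ⟨Cγ, hγ⟩ := hγ
  set K := (2 : ℝ) ^ Ca₀ * exp ((Ca + n + (n + 1) / g₀) * Cγ) * 2 ^ (Ca * g₁)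
  set B := 1 + ∫⁻ x : En n, ENNReal.ofReal (decay x)
  have hK_pos : 0 < K := by positivity
  have hB_top : B ≠ ⊤ := ENNReal.add_ne_top.2 ⟨one_ne_top, lintegral_decay_ne_top⟩
  have hB_one : 1 ≤ B := le_self_add
  have hB_pos : B ≠ 0 := (one_pos.trans_le hB_one).ne'
  have hγ_pos (x : En n) : 0 < γ x := hg₀.trans_le (hγ_lower x)
  have hq_pos (x : En n) : 0 < q x := by
    rw [hqγ]
    exact mul_pos (hγ_pos x) (one_pos.trans_le (hq₀ x))
  have hB_real : 0 < B.toReal := ENNReal.toReal_pos hB_pos hB_top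
  refine ⟨3 * K * B.toReal, by positivity, fun lam h_modular => ?_⟩
  set G := fun x => max (seqFunction α q lam x ^ γ x) (ENNReal.ofReal (decay x)) with hG
  have h_factor (x : En n) :
      seqFunction α₀ q₀ (calderonFactor α α₀ γ lam) x ≤ 3 * ENNReal.ofReal K * G x := by
    simp only [hG, seqFunction, hqγ]
    exact ellNorm_le_of_le_rpow_add_geometric (hq₀ x) (hγ_pos x) hK_pos.le (level_nonneg _ _ · _)
      fun v => level_calderonFactor_le hα hα₀ hγ hg₀ hγ_lower hγ_upper
        (fun m => level_dyadicCorner_le_of_modular_le_one hα hp hq_pos h_modular) x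
  have hG_modular : ∫⁻ x, G x ^ p₀ x ≤ B :=
    (lintegral_max_rpow_le hp₀ hpγ (by unfold decay; fun_prop)
      fun x => ENNReal.ofReal_le_one.2 (decay_le_one x)).trans (add_le_add_left h_modular _)
  have h_scaled (x : En n) : seqFunction α₀ q₀
      (fun v m => calderonFactor α α₀ γ lam v m / (3 * K * B.toReal : ℝ)) x ≤ B⁻¹ * G x := by
    rw [seqFunction_div _ (by positivity) x (one_pos.trans_le (hq₀ x)),
      ENNReal.ofReal_mul (by positivity), ENNReal.ofReal_mul zero_le_three, ENNReal.ofReal_ofNat,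
      ENNReal.ofReal_toReal hB_top]
    refine ENNReal.div_le_of_le_mul' ((h_factor x).trans_eq ?_)
    rw [mul_assoc _ B, ← mul_assoc B, ENNReal.mul_inv_cancel hB_pos hB_top, one_mul]
  rw [seqNorm_eq_luxNorm, ← ENNReal.inv_mul_cancel hB_pos hB_top]
  exact luxNorm_le_mul hp₀ hB_one hB_top h_scaled hG_modular

lemma norm_eq_norm_calderonFactor_mul {θ : ℝ} {δ : En n → ℝ}
    (hα : ∀ x, α x = (1 - θ) * α₀ x + θ * α₁ x) (hγδ : ∀ x, (1 - θ) * γ x + θ * δ x = 1)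
    (lam : ℕ → (Fin n → ℤ) → ℂ) (v : ℕ) (m : Fin n → ℤ) :
    ‖lam v m‖ = ‖calderonFactor α α₀ γ lam v m‖ ^ (1 - θ) *
      ‖calderonFactor α α₁ δ lam v m‖ ^ θ := by
  simp only [norm_calderonFactor]
  set y := dyadicCorner v m
  have h_level := level_nonneg α lam v y
  have h_pow : (level α lam v y ^ γ y) ^ (1 - θ) * (level α lam v y ^ δ y) ^ θ =
      level α lam v y := by
    have h_exponent : γ y * (1 - θ) + δ y * θ = 1 := by linarith [hγδ y]
    rw [← Real.rpow_mul h_level, ← Real.rpow_mul h_level, ← Real.rpow_add' h_level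
      (by rw [h_exponent]; exact one_ne_zero), h_exponent, Real.rpow_one]
  have h_scale := dyadicScale_pos (n := n) v
  rw [Real.div_rpow (rpow_nonneg h_level _) (h_scale _).le,
    Real.div_rpow (rpow_nonneg h_level _) (h_scale _).le, div_mul_div_comm, h_pow,
    ← dyadicScale_interp, ← hα, level, ← mem_dyadicCube_iff.1 dyadicCorner_mem_dyadicCube,
    mul_div_cancel_left₀ _ (h_scale _).ne']

end Factorization

section CalderonProduct

variable {n : ℕ} {θ : ℝ} {p₀ p₁ q₀ q₁ α₀ α₁ p q α : En n → ℝ}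

lemma exists_bounds_interp_div (hθ : θ ∈ Icc 0 1) (hp₀ : ∃ c, LocLogHolder c p₀)
    (hp₁ : ∃ c, LocLogHolder c p₁) (hp₀_one : ∀ x, 1 ≤ p₀ x) (hp₁_one : ∀ x, 1 ≤ p₁ x)
    (hp : ∀ x, 1 / p x = (1 - θ) / p₀ x + θ / p₁ x) :
    ∃ g₀ g₁ : ℝ, 0 < g₀ ∧ (∀ x, g₀ ≤ p x / p₀ x) ∧ ∀ x, p x / p₀ x ≤ g₁ := by
  obtain ⟨b₀, hb₀⟩ := hp₀.choose_spec.exists_forall_le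
  obtain ⟨b₁, hb₁⟩ := hp₁.choose_spec.exists_forall_le
  have hb₀_pos : 0 < b₀ := one_pos.trans_le ((hp₀_one 0).trans (hb₀ 0))
  refine ⟨1 / b₀, b₁, one_div_pos.2 hb₀_pos, fun x => ?_, fun x => ?_⟩
  · exact div_le_div₀ (zero_le_one.trans (one_le_of_interp hθ (hp₀_one x) (hp₁_one x) (hp x)))
      (one_le_of_interp hθ (hp₀_one x) (hp₁_one x) (hp x)) (one_pos.trans_le (hp₀_one x)) (hb₀ x)
  · rw [interp_div_eq hθ (hp₀_one x) (hp₁_one x) (hp x)]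
    exact (div_le_self (zero_le_one.trans (hp₁_one x))
      (interp_denom_ge_one hθ (hp₀_one x) (hp₁_one x))).trans (hb₁ x)

lemma exists_hasDyadicOsc_interp_div (hθ : θ ∈ Icc 0 1) (hp₀ : ∃ c, GlobLogHolder c p₀)
    (hp₁ : ∃ c, GlobLogHolder c p₁) (hp₀_one : ∀ x, 1 ≤ p₀ x) (hp₁_one : ∀ x, 1 ≤ p₁ x)
    (hp : ∀ x, 1 / p x = (1 - θ) / p₀ x + θ / p₁ x) :
    ∃ C, HasDyadicOsc logWeight C fun x => p x / p₀ x := by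
  obtain ⟨b₀, hb₀⟩ := hp₀.choose_spec.1.exists_forall_le
  obtain ⟨b₁, hb₁⟩ := hp₁.choose_spec.1.exists_forall_le
  obtain ⟨C₀, hC₀⟩ := hp₀.choose_spec.exists_hasDyadicOsc
  obtain ⟨C₁, hC₁⟩ := hp₁.choose_spec.exists_hasDyadicOsc
  refine ⟨_, hC₁.of_abs_sub_le hC₀ (zero_le_one.trans ((hp₀_one 0).trans (hb₀ 0)))
    (zero_le_one.trans ((hp₁_one 0).trans (hb₁ 0))) logWeight_nonneg fun x y => ?_⟩
  rw [interp_div_eq hθ (hp₀_one x) (hp₁_one x) (hp x),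
    interp_div_eq hθ (hp₀_one y) (hp₁_one y) (hp y)]
  exact abs_interp_div_sub_le hθ (hp₀_one x) (hp₁_one x) (hp₀_one y) (hp₁_one y) (hb₀ y) (hb₁ y)

lemma exists_hasDyadicOsc_interp (hθ : θ ∈ Icc 0 1) (hα₀ : ∃ c, LocLogHolder c α₀)
    (hα₁ : ∃ c, LocLogHolder c α₁) (hα : ∀ x, α x = (1 - θ) * α₀ x + θ * α₁ x) :
    ∃ C, HasDyadicOsc (fun v _ => v) C α := by
  obtain ⟨C₀, hC₀⟩ := hα₀.choose_spec.exists_hasDyadicOsc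
  obtain ⟨C₁, hC₁⟩ := hα₁.choose_spec.exists_hasDyadicOsc
  have hθ' : 0 ≤ 1 - θ := sub_nonneg.2 hθ.2
  refine ⟨_, hC₀.of_abs_sub_le hC₁ hθ' hθ.1 (fun v _ => v.cast_nonneg) fun x y => ?_⟩
  calc |α x - α y| = |(1 - θ) * (α₀ x - α₀ y) + θ * (α₁ x - α₁ y)| := by
        rw [hα, hα]; ring_nf
    _ ≤ |(1 - θ) * (α₀ x - α₀ y)| + |θ * (α₁ x - α₁ y)| := abs_add_le _ _
    _ = (1 - θ) * |α₀ x - α₀ y| + θ * |α₁ x - α₁ y| := by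
        rw [abs_mul, abs_mul, abs_of_nonneg hθ', abs_of_nonneg hθ.1]

lemma exists_seqNorm_calderonFactor_interp_le_one (hθ : θ ∈ Icc 0 1)
    (hp₀ : ∃ c, GlobLogHolder c p₀) (hp₁ : ∃ c, GlobLogHolder c p₁) (hp₀_one : ∀ x, 1 ≤ p₀ x)
    (hp₁_one : ∀ x, 1 ≤ p₁ x) (hq₀_one : ∀ x, 1 ≤ q₀ x) (hα₀ : ∃ c, LocLogHolder c α₀)
    (hα : ∃ C, HasDyadicOsc (fun v _ => v) C α) (hp : ∀ x, 1 / p x = (1 - θ) / p₀ x + θ / p₁ x)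
    (hγ : ∀ x, p x / p₀ x = q x / q₀ x) :
    ∃ D : ℝ, 0 < D ∧ ∀ lam, ∫⁻ x, seqFunction α q lam x ^ p x ≤ 1 →
      seqNorm α₀ p₀ q₀
        (fun v m => calderonFactor α α₀ (fun x => p x / p₀ x) lam v m / D) ≤ 1 := by
  obtain ⟨g₀, g₁, hg₀, h_lower, h_upper⟩ := exists_bounds_interp_div hθ (hp₀.imp fun _ h => h.1)
    (hp₁.imp fun _ h => h.1) hp₀_one hp₁_one hp
  refine exists_seqNorm_calderonFactor_le_one hα (hα₀.choose_spec.exists_hasDyadicOsc)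
    (exists_hasDyadicOsc_interp_div hθ hp₀ hp₁ hp₀_one hp₁_one hp) hg₀ h_lower h_upper
    (fun x => one_le_of_interp hθ (hp₀_one x) (hp₁_one x) (hp x)) hp₀_one hq₀_one
    (fun x => ?_) (fun x => ?_)
  · exact (div_mul_cancel₀ _ (one_pos.trans_le (hp₀_one x)).ne').symm
  · rw [hγ, div_mul_cancel₀ _ (one_pos.trans_le (hq₀_one x)).ne']

lemma calderonNorm_le_of_forall_factor {N₀ N₁ : (ℕ → (Fin n → ℤ) → ℂ) → ℝ≥0∞} {D : ℝ}
    (hθ : θ ∈ Icc 0 1) (hD : 0 < D) (hq : ∀ x, 0 < q x)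
    (h : ∀ lam, ∫⁻ x, seqFunction α q lam x ^ p x ≤ 1 → ∃ μ ν, N₀ μ ≤ 1 ∧ N₁ ν ≤ 1 ∧
      ∀ v m, ‖lam v m‖ ≤ D * ‖μ v m‖ ^ (1 - θ) * ‖ν v m‖ ^ θ)
    (lam : ℕ → (Fin n → ℤ) → ℂ) :
    calderonNorm N₀ N₁ θ lam ≤ ENNReal.ofReal D * seqNorm α p q lam := by
  have hθ' : 0 ≤ 1 - θ := sub_nonneg.2 hθ.2
  rw [seqNorm_eq_luxNorm, mul_comm,
    ← ENNReal.div_le_iff (ENNReal.ofReal_pos.2 hD).ne' ENNReal.ofReal_ne_top]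
  refine le_sInf fun c ⟨hc_pos, hc⟩ => ENNReal.div_le_of_le_mul' ?_
  rcases eq_or_ne c ⊤ with rfl | hc_top
  · simp only [ENNReal.mul_top (ENNReal.ofReal_pos.2 hD).ne', le_top]
  obtain ⟨r, hr, rfl⟩ : ∃ r : ℝ, 0 < r ∧ c = ENNReal.ofReal r :=
    ⟨c.toReal, ENNReal.toReal_pos hc_pos.ne' hc_top, (ENNReal.ofReal_toReal hc_top).symm⟩
  obtain ⟨μ, ν, hμ, hν, h_le⟩ := h (fun v m => lam v m / r) (by
    simpa only [seqFunction_div lam hr _ (hq _)] using hc)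
  refine sInf_le ⟨μ, ν, hμ, hν, fun v m => ?_⟩
  rw [ENNReal.ofReal_rpow_of_nonneg (norm_nonneg _) hθ',
    ENNReal.ofReal_rpow_of_nonneg (norm_nonneg _) hθ.1, ← ENNReal.ofReal_mul hD.le,
    ← ENNReal.ofReal_mul (by positivity), ← ENNReal.ofReal_mul (by positivity)]
  refine ENNReal.ofReal_le_ofReal ?_
  have h_div := h_le v m
  rw [norm_div, Complex.norm_real, Real.norm_of_nonneg hr.le, div_le_iff₀ hr] at h_div
  linarith

lemma interp_div_right_eq (hθ : θ ≠ 0) {a₀ a₁ b₀ b₁ a b : ℝ} (ha : a ≠ 0) (hb : b ≠ 0)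
    (h_a : 1 / a = (1 - θ) / a₀ + θ / a₁) (h_b : 1 / b = (1 - θ) / b₀ + θ / b₁)
    (h : a / a₀ = b / b₀) : a / a₁ = b / b₁ := by
  have h_weights := (interp_weights_eq_one ha h_a).trans (interp_weights_eq_one hb h_b).symm
  rw [h] at h_weights
  exact mul_left_cancel₀ hθ (add_left_cancel h_weights)

theorem exists_calderonNorm_le_mul_seqNorm (hθ : θ ∈ Ioo 0 1)
    (hp₀ : ∃ c, GlobLogHolder c p₀) (hp₁ : ∃ c, GlobLogHolder c p₁)
    (hp₀_one : ∀ x, 1 ≤ p₀ x) (hp₁_one : ∀ x, 1 ≤ p₁ x) (hq₀_one : ∀ x, 1 ≤ q₀ x)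
    (hq₁_one : ∀ x, 1 ≤ q₁ x) (hα₀ : ∃ c, LocLogHolder c α₀) (hα₁ : ∃ c, LocLogHolder c α₁)
    (hp : ∀ x, 1 / p x = (1 - θ) / p₀ x + θ / p₁ x)
    (hq : ∀ x, 1 / q x = (1 - θ) / q₀ x + θ / q₁ x)
    (hα : ∀ x, α x = (1 - θ) * α₀ x + θ * α₁ x) (hγ : ∀ x, p x / p₀ x = q x / q₀ x) :
    ∃ D : ℝ, 0 < D ∧ ∀ lam, calderonNorm (seqNorm α₀ p₀ q₀) (seqNorm α₁ p₁ q₁) θ lam ≤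
      ENNReal.ofReal D * seqNorm α p q lam := by
  have hθ_Icc := Ioo_subset_Icc_self hθ
  have hp_pos (x : En n) : 0 < p x :=
    one_pos.trans_le (one_le_of_interp hθ_Icc (hp₀_one x) (hp₁_one x) (hp x))
  have hq_pos (x : En n) : 0 < q x :=
    one_pos.trans_le (one_le_of_interp hθ_Icc (hq₀_one x) (hq₁_one x) (hq x))
  have hδ (x : En n) : p x / p₁ x = q x / q₁ x :=
    interp_div_right_eq hθ.1.ne' (hp_pos x).ne' (hq_pos x).ne' (hp x) (hq x) (hγ x)
  have hp_symm (x : En n) : 1 / p x = (1 - (1 - θ)) / p₁ x + (1 - θ) / p₀ x := by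
    rw [hp]; ring
  have hα_osc := exists_hasDyadicOsc_interp hθ_Icc hα₀ hα₁ hα
  obtain ⟨D₀, hD₀, h₀⟩ := exists_seqNorm_calderonFactor_interp_le_one hθ_Icc hp₀ hp₁ hp₀_one
    hp₁_one hq₀_one hα₀ hα_osc hp hγ
  obtain ⟨D₁, hD₁, h₁⟩ := exists_seqNorm_calderonFactor_interp_le_one
    ⟨sub_nonneg.2 hθ_Icc.2, sub_le_self 1 hθ_Icc.1⟩ hp₁ hp₀ hp₁_one hp₀_one hq₁_one hα₁ hα_osc
    hp_symm hδ
  have hD : 0 < D₀ ^ (1 - θ) * D₁ ^ θ := by positivity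
  refine ⟨_, hD, calderonNorm_le_of_forall_factor hθ_Icc hD hq_pos fun lam h_modular =>
    ⟨_, _, h₀ lam h_modular, h₁ lam h_modular, fun v m => le_of_eq ?_⟩⟩
  rw [norm_eq_norm_calderonFactor_mul hα
    (fun x => interp_weights_eq_one (hp_pos x).ne' (hp x)) lam v m]
  simp only [norm_div, Complex.norm_real, Real.norm_of_nonneg hD₀.le, Real.norm_of_nonneg hD₁.le,
    Real.div_rpow (norm_nonneg _) hD₀.le, Real.div_rpow (norm_nonneg _) hD₁.le]
  field_simp

end CalderonProduct

theorem stmt14_general {n : ℕ} {θ : ℝ} (hθ : θ ∈ Ioo 0 1) {p₀ p₁ q₀ q₁ α₀ α₁ p q α : En n → ℝ}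
    (hp₀ : ∃ c, GlobLogHolder c p₀) (hp₁ : ∃ c, GlobLogHolder c p₁) (hq₀ : Measurable q₀)
    (hp₀_one : ∀ x, 1 ≤ p₀ x) (hp₁_one : ∀ x, 1 ≤ p₁ x) (hq₀_one : ∀ x, 1 ≤ q₀ x)
    (hq₁_one : ∀ x, 1 ≤ q₁ x) (hα₀ : ∃ c, LocLogHolder c α₀) (hα₁ : ∃ c, LocLogHolder c α₁)
    (hp : ∀ x, 1 / p x = (1 - θ) / p₀ x + θ / p₁ x)
    (hq : ∀ x, 1 / q x = (1 - θ) / q₀ x + θ / q₁ x)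
    (hα : ∀ x, α x = (1 - θ) * α₀ x + θ * α₁ x) (hγ : ∀ x, p x / p₀ x = q x / q₀ x) :
    ∃ c₁ c₂ : ℝ, 0 < c₁ ∧ 0 < c₂ ∧ ∀ lam : ℕ → (Fin n → ℤ) → ℂ,
      ENNReal.ofReal c₁ * seqNorm α p q lam ≤
          calderonNorm (seqNorm α₀ p₀ q₀) (seqNorm α₁ p₁ q₁) θ lam ∧
        calderonNorm (seqNorm α₀ p₀ q₀) (seqNorm α₁ p₁ q₁) θ lam ≤
          ENNReal.ofReal c₂ * seqNorm α p q lam := by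
  obtain ⟨D, hD, h_upper⟩ := exists_calderonNorm_le_mul_seqNorm hθ hp₀ hp₁ hp₀_one hp₁_one
    hq₀_one hq₁_one hα₀ hα₁ hp hq hα hγ
  refine ⟨4⁻¹, D, by positivity, hD, fun lam => ⟨?_, h_upper lam⟩⟩
  have h_lower := seqNorm_le_four_mul_calderonNorm (Ioo_subset_Icc_self hθ)
    hp₀.choose_spec.1.continuous.measurable hq₀ hα₀.choose_spec.continuous.measurable
    hp₀_one hp₁_one hq₀_one hq₁_one hp hq hα lam
  rw [ENNReal.ofReal_inv_of_pos four_pos, ENNReal.ofReal_ofNat, mul_comm, ← div_eq_mul_inv]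
  exact ENNReal.div_le_of_le_mul' h_lower

/-- Theorem `calderon-prod11 copy(1)` (i): if `p(x)/p₀(x) = q(x)/q₀(x)`
for all `x`, then `(f^{α₀(·)}_{p₀(·),q₀(·)})^{1−θ}·(f^{α₁(·)}_{p₁(·),q₁(·)})^θ
= f^{α(·)}_{p(·),q(·)}` with equivalent norms. -/
theorem stmt14 {n : ℕ} (θ : ℝ) (hθ : θ ∈ Set.Ioo (0 : ℝ) 1)
    (p₀ p₁ q₀ q₁ α₀ α₁ p q α : En n → ℝ)
    (hp₀ : ∃ c, GlobLogHolder c p₀) (hp₁ : ∃ c, GlobLogHolder c p₁)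
    (hq₀ : ∃ c, GlobLogHolder c q₀) (hq₁ : ∃ c, GlobLogHolder c q₁)
    (hp₀b : ∃ b : ℝ, ∀ x, 1 ≤ p₀ x ∧ p₀ x ≤ b)
    (hp₁b : ∃ b : ℝ, ∀ x, 1 ≤ p₁ x ∧ p₁ x ≤ b)
    (hq₀b : ∃ b : ℝ, ∀ x, 1 ≤ q₀ x ∧ q₀ x ≤ b)
    (hq₁b : ∃ b : ℝ, ∀ x, 1 ≤ q₁ x ∧ q₁ x ≤ b)
    (hα₀ : ∃ c, LocLogHolder c α₀) (hα₁ : ∃ c, LocLogHolder c α₁)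
    (hp : ∀ x, 1 / p x = (1 - θ) / p₀ x + θ / p₁ x)
    (hq : ∀ x, 1 / q x = (1 - θ) / q₀ x + θ / q₁ x)
    (hα : ∀ x, α x = (1 - θ) * α₀ x + θ * α₁ x)
    (hγ : ∀ x, p x / p₀ x = q x / q₀ x) :
    ∃ c₁ c₂ : ℝ, 0 < c₁ ∧ 0 < c₂ ∧ ∀ lam : ℕ → (Fin n → ℤ) → ℂ,
      ENNReal.ofReal c₁ * seqNorm α p q lam ≤
          calderonNorm (seqNorm α₀ p₀ q₀) (seqNorm α₁ p₁ q₁) θ lam ∧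
        calderonNorm (seqNorm α₀ p₀ q₀) (seqNorm α₁ p₁ q₁) θ lam ≤
          ENNReal.ofReal c₂ * seqNorm α p q lam := by
  exact stmt14_general hθ hp₀ hp₁ hq₀.choose_spec.1.continuous.measurable
    (fun x => (hp₀b.choose_spec x).1) (fun x => (hp₁b.choose_spec x).1)
    (fun x => (hq₀b.choose_spec x).1) (fun x => (hq₁b.choose_spec x).1) hα₀ hα₁ hp hq hα hγ
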